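/- Let F(x,t) = x² A_{n−2}(x) + B_n(x) t + O(t²) be a family of polynomials of the first kind, where the subscripts denote degrees, A_{n−2}(0)·B_n(0) ≠ 0 and A_{n−2}(x) is square-free. Then ver(F) = −4 · B_n(0) · A_{n−2}(0)³. -/

import Mathlib

open Finset Polynomial

noncomputable section

/-- The limit of a Hahn (Puiseux) series as `t → 0`: the coefficient of the lowest
power of `t` occurring in it (its leading coefficient). -/
def lim0 {L : Type*} [Field L] (f : HahnSeries ℚ L) : L := f.coeff f.order

/-- `s` is a Puiseux series with nonnegative support and constant term `a`
(i.e. `s(0) = a`). -/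
def HasConst {L : Type*} [Field L] (s : HahnSeries ℚ L) (a : L) : Prop :=
  s.coeff 0 = a ∧ ∀ q < (0 : ℚ), s.coeff q = 0

/-- The natural ring map `A[[t]] → L((t^ℚ))` induced by `φ : A →+* L`. -/
def Phi {A L : Type*} [CommRing A] [Field L] (φ : A →+* L) :
    PowerSeries A →+* HahnSeries ℚ L :=
  (HahnSeries.ofPowerSeries ℚ L).comp (PowerSeries.map φ)

/-- The polynomial with power-series coefficients determined by a family
`F(x,t) = Σ_i p_i(x) t^i` of polynomials of degree at most `n'`. -/
def fam {A : Type*} [CommRing A] (n' : ℕ) (p : ℕ → Polynomial A) :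
    Polynomial (PowerSeries A) :=
  ∑ j ∈ Finset.range (n' + 1), Polynomial.C (PowerSeries.mk fun i => (p i).coeff j) * X ^ j

/-- `∏_{q ≠ q'} (S q − S q')`, the product of the differences of all (ordered) pairs of
distinct `t`-roots.  For a monic family it equals `(-1)^(N(N-1)/2)` times the discriminant
`Δ_{A[[t]]}(F) = ∏_{q<q'} (S q − S q')²`; in particular it is nonzero iff
`Δ_{A[[t]]}(F) ≠ 0`. -/
def rootsSep {L : Type*} [Field L] {ι : Type*} [Fintype ι] [DecidableEq ι]
    (S : ι → HahnSeries ℚ L) : HahnSeries ℚ L :=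
  ∏ q ∈ Finset.univ.offDiag, (S q.1 - S q.2)

/-- `Δ(F, f_ν)(a ν ℓ, t)_0`: the limit of the generalized formal discriminant of the family
with respect to `f_ν = ∏_ℓ (x − a ν ℓ)`, evaluated at `x = a ν ℓ`.  Here the `t`-roots
approaching the roots of `f_ν` are grouped as `s ν · i` for `i` in `Fin (n ν)`; following
Definition 2.3, `s'_i(x) = f_ν(x) − ∏_ℓ (x − s ν ℓ i)`, so that
`s'_i(x) − s'_j(x) = ∏_ℓ (x − s ν ℓ j) − ∏_ℓ (x − s ν ℓ i)`, and
`Δ(F,f_ν)(x,t) = [∏_{others} (x − s_ℓ)]^(2 n ν − 2) ∏_{i<j} (s'_i − s'_j)²`. -/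
def gdlim {L : Type*} [Field L] {m : ℕ} (d n : Fin m → ℕ)
    (a : (ν : Fin m) → Fin (d ν) → L)
    (s : (ν : Fin m) → (ℓ : Fin (d ν)) → Fin (n ν) → HahnSeries ℚ L)
    (ν : Fin m) (ℓ : Fin (d ν)) : L :=
  lim0 ((∏ ν' ∈ Finset.univ.erase ν, ∏ ℓ', ∏ i', (HahnSeries.C (a ν ℓ) - s ν' ℓ' i')) ^
      (2 * n ν - 2) *
    ∏ q ∈ Finset.univ.filter (fun q : Fin (n ν) × Fin (n ν) => q.1 < q.2),
      ((∏ ℓ', (HahnSeries.C (a ν ℓ) - s ν ℓ' q.2)) -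
        ∏ ℓ', (HahnSeries.C (a ν ℓ) - s ν ℓ' q.1)) ^ 2)

/-- The discriminant `Δ(f) = ∏_{ℓ<ℓ'} (a ℓ − a ℓ')²` of a monic split polynomial
`f = ∏_ℓ (x − a ℓ)`. -/
def discOf {L : Type*} [Field L] {d : ℕ} (a : Fin d → L) : L :=
  ∏ q ∈ Finset.univ.filter (fun q : Fin d × Fin d => q.1 < q.2), (a q.1 - a q.2) ^ 2

/-- The vertex `ver(F)` of the family (Definition 3.1), computed from the root data:
`ver(F) = ∏_{ν,ℓ} Δ(F,f_ν)(a_{νℓ},t)_0 · ∏_{ν<ν'} res(f_ν,f_{ν'})^(2(n_ν+n_{ν'}−n_ν n_{ν'}))`,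
where `res(f_ν, f_{ν'}) = ∏_{ℓ,ℓ'} (a ν ℓ − a ν' ℓ')`. -/
def ver {L : Type*} [Field L] {m : ℕ} (d n : Fin m → ℕ)
    (a : (ν : Fin m) → Fin (d ν) → L)
    (s : (ν : Fin m) → (ℓ : Fin (d ν)) → Fin (n ν) → HahnSeries ℚ L) : L :=
  (∏ ν, ∏ ℓ, gdlim d n a s ν ℓ) *
    ∏ ν, ∏ ν' ∈ Finset.Ioi ν,
      (∏ ℓ, ∏ ℓ', (a ν ℓ - a ν' ℓ')) ^
        (2 * ((n ν : ℤ) + (n ν' : ℤ) - (n ν : ℤ) * (n ν' : ℤ)))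

/-- `f = a t^q + higher order`. -/
def HasLC {L : Type*} [Field L] (f : HahnSeries ℚ L) (q : ℚ) (a : L) : Prop :=
  f.coeff q = a ∧ ∀ q' < q, f.coeff q' = 0

theorem HasLC.mul {L : Type*} [Field L] {f g : HahnSeries ℚ L} {q r : ℚ} {a b : L}
    (hf : HasLC f q a) (hg : HasLC g r b) : HasLC (f * g) (q + r) (a * b) := by
  constructor
  · rw [HahnSeries.coeff_mul, Finset.sum_eq_single (q, r)]
    · simp [hf.1, hg.1]
    · rintro ⟨i, j⟩ hij hne
      rw [Finset.mem_antidiagonal] at hij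
      obtain ⟨_, _, h⟩ := hij
      simp only at h ⊢
      rcases lt_trichotomy i q with h1 | h1 | h1
      · rw [hf.2 _ h1, zero_mul]
      · exfalso; apply hne; subst h1; simp at h; rw [h]
      · rw [hg.2 j (by linarith), mul_zero]
    · intro hn
      rw [Finset.mem_antidiagonal] at hn
      simp only [HahnSeries.mem_support, not_and_or, not_not] at hn
      rcases hn with h | h | h
      · simp [h]
      · simp [h]
      · simp at h
  · intro q' hq'
    rw [HahnSeries.coeff_mul]
    apply Finset.sum_eq_zero
    rintro ⟨i, j⟩ hij
    rw [Finset.mem_antidiagonal] at hij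
    obtain ⟨_, _, h⟩ := hij
    simp only at h ⊢
    rcases lt_or_ge i q with h1 | h1
    · rw [hf.2 _ h1, zero_mul]
    · rw [hg.2 j (by linarith), mul_zero]

theorem HasLC.add {L : Type*} [Field L] {f g : HahnSeries ℚ L} {q : ℚ} {a b : L}
    (hf : HasLC f q a) (hg : HasLC g q b) : HasLC (f + g) q (a + b) :=
  ⟨by simp [hf.1, hg.1], fun q' h => by simp [hf.2 q' h, hg.2 q' h]⟩

theorem HasLC.sub {L : Type*} [Field L] {f g : HahnSeries ℚ L} {q : ℚ} {a b : L}
    (hf : HasLC f q a) (hg : HasLC g q b) : HasLC (f - g) q (a - b) :=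
  ⟨by simp [hf.1, hg.1], fun q' h => by simp [hf.2 q' h, hg.2 q' h]⟩

theorem hasLC_C {L : Type*} [Field L] (a : L) : HasLC (HahnSeries.C a : HahnSeries ℚ L) 0 a :=
  ⟨by simp, fun q h => by simp [HahnSeries.C_apply, HahnSeries.coeff_single_of_ne h.ne]⟩

theorem HasLC.lower {L : Type*} [Field L] {f : HahnSeries ℚ L} {q r : ℚ} {a : L}
    (hf : HasLC f q a) (h : r < q) : HasLC f r 0 :=
  ⟨hf.2 _ h, fun q' h' => hf.2 _ (h'.trans h)⟩

theorem HasLC.prod {L : Type*} [Field L] {ι : Type*} (s : Finset ι) (f : ι → HahnSeries ℚ L)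
    (a : ι → L) (h : ∀ i, HasLC (f i) 0 (a i)) : HasLC (∏ i ∈ s, f i) 0 (∏ i ∈ s, a i) := by
  classical
  induction s using Finset.induction_on with
  | empty => simpa using hasLC_C (1 : L)
  | insert i s hi ih =>
    rw [Finset.prod_insert hi, Finset.prod_insert hi]
    simpa using (h i).mul ih

theorem HasLC.lim0 {L : Type*} [Field L] {f : HahnSeries ℚ L} {q : ℚ} {a : L}
    (hf : HasLC f q a) (ha : a ≠ 0) : lim0 f = a := by
  have h0 : f.coeff q ≠ 0 := by rw [hf.1]; exact ha
  have hne : f ≠ 0 := by rintro rfl; simp at h0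
  have h1 : f.order = q := by
    apply le_antisymm (HahnSeries.order_le_of_coeff_ne_zero h0)
    by_contra h
    push Not at h
    exact (HahnSeries.coeff_order_eq_zero.not.mpr hne) (hf.2 _ h)
  rw [_root_.lim0, h1, hf.1]

theorem lim0_mul' {L : Type*} [Field L] (f g : HahnSeries ℚ L) :
    lim0 (f * g) = lim0 f * lim0 g := by
  have h : ∀ f : HahnSeries ℚ L, lim0 f = f.leadingCoeff := by
    intro f
    rw [HahnSeries.leadingCoeff_eq]; rfl
  rw [h, h, h, HahnSeries.leadingCoeff_mul]

theorem hasLC_Phi0 {A L : Type*} [CommRing A] [Field L] (φ : A →+* L) (f : ℕ → A) :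
    HasLC (Phi φ (PowerSeries.mk f)) 0 (φ (f 0)) := by
  constructor
  · have := HahnSeries.ofPowerSeries_apply_coeff (Γ := ℚ) (PowerSeries.map φ (PowerSeries.mk f)) 0
    simpa [Phi] using this
  · intro q hq
    simp only [Phi, RingHom.comp_apply, HahnSeries.ofPowerSeries_apply]
    apply HahnSeries.embDomain_of_notMem_range
    rintro ⟨n, hn⟩
    have : (n : ℚ) = q := hn
    have h2 : (0 : ℚ) ≤ n := n.cast_nonneg
    linarith

theorem hasLC_Phi1 {A L : Type*} [CommRing A] [Field L] (φ : A →+* L) (f : ℕ → A)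
    (h0 : f 0 = 0) : HasLC (Phi φ (PowerSeries.mk f)) 1 (φ (f 1)) := by
  constructor
  · have := HahnSeries.ofPowerSeries_apply_coeff (Γ := ℚ) (PowerSeries.map φ (PowerSeries.mk f)) 1
    simpa [Phi] using this
  · intro q hq
    by_cases hq0 : q = 0
    · rw [hq0, (hasLC_Phi0 φ f).1, h0, map_zero]
    simp only [Phi, RingHom.comp_apply, HahnSeries.ofPowerSeries_apply]
    apply HahnSeries.embDomain_of_notMem_range
    rintro ⟨n, hn⟩
    have h3 : (n : ℚ) = q := hn
    subst h3
    have : n < 1 := by exact_mod_cast hq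
    have : n ≠ 0 := by exact_mod_cast hq0
    omega

theorem coeff_fam {A : Type*} [CommRing A] (N : ℕ) (p : ℕ → Polynomial A) (j : ℕ) (hj : j ≤ N) :
    (fam N p).coeff j = PowerSeries.mk fun i => (p i).coeff j := by
  simp only [fam, finsetSum_coeff, coeff_C_mul, coeff_X_pow]
  rw [Finset.sum_eq_single j]
  · simp
  · intro b _ hb
    simp [hb.symm]
  · intro h
    simp at h; omega

theorem coeff_prod_hasLC {L : Type*} [Field L] {ι : Type*} (s : Finset ι)
    (r : ι → HahnSeries ℚ L) (a : ι → L) (h : ∀ i, HasLC (r i) 0 (a i)) (k : ℕ) :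
    ∃ b, HasLC ((∏ i ∈ s, (X - C (r i))).coeff k) 0 b := by
  classical
  induction s using Finset.induction_on generalizing k with
  | empty =>
    by_cases hk : k = 0
    · subst hk; exact ⟨1, by simpa using hasLC_C (1 : L)⟩
    · exact ⟨0, by simpa [coeff_one, hk] using hasLC_C (0 : L)⟩
  | insert i s hi ih =>
    rw [Finset.prod_insert hi, sub_mul, coeff_sub, coeff_C_mul]
    obtain ⟨b, hb⟩ := ih k
    have h1 := (h i).mul hb
    rw [add_zero] at h1
    cases k with
    | zero => exact ⟨_, by simpa using (hasLC_C (0 : L)).sub h1⟩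
    | succ k =>
      obtain ⟨b', hb'⟩ := ih k
      rw [coeff_X_mul]
      exact ⟨_, hb'.sub h1⟩

/-- **Proposition 3.2** (families of the first kind).  Let
`F(x,t) = x² A_{n−2}(x) + B_n(x) t + O(t²)` with `A_{n−2}(0)·B_n(0) ≠ 0` and `A_{n−2}`
square-free.  Then `ver(F) = −4 B_n(0) A_{n−2}(0)³`.
Here `F_0 = x² A_{n−2}` has the factors `f_1 = x` (multiplicity `2`, `t`-roots `u, v`)
and `f_2 = A_{n−2} = ∏ᵢ (x − aA i)` (multiplicity `1`, `t`-roots `r i`), and `ver(F)`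
is written out according to Definition 3.1. -/
theorem stmt4 {A L : Type*} [CommRing A] [IsDomain A]
    [Field L] [IsAlgClosed L] [CharZero L]
    (φ : A →+* L) (hφ : Function.Injective φ)
    (N : ℕ) (hN : 2 ≤ N)
    (Aq Bq : Polynomial A) (hAmonic : Aq.Monic) (hAdeg : Aq.natDegree = N - 2)
    (hBdeg : Bq.natDegree ≤ N) (hsqfree : Squarefree Aq)
    (hAB : Aq.eval 0 * Bq.eval 0 ≠ 0)
    (p : ℕ → Polynomial A) (hdeg : ∀ i, (p i).natDegree ≤ N)
    (hp0 : p 0 = X ^ 2 * Aq) (hp1 : p 1 = Bq)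
    (aA : Fin (N - 2) → L) (haInj : Function.Injective aA) (haNe : ∀ i, aA i ≠ 0)
    (hAfac : Aq.map φ = ∏ i, (X - C (aA i)))
    (u v : HahnSeries ℚ L) (hu : HasConst u 0) (hv : HasConst v 0)
    (r : Fin (N - 2) → HahnSeries ℚ L) (hr : ∀ i, HasConst (r i) (aA i))
    (c : HahnSeries ℚ L)
    (hsplit : (fam N p).map (Phi φ) =
      C c * ((X - C u) * (X - C v) * ∏ i, (X - C (r i)))) :
    lim0 ((∏ i, (HahnSeries.C (0 : L) - r i)) ^ (2 * 2 - 2) * (u - v) ^ 2) *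
        (∏ i, lim0 (((HahnSeries.C (aA i) - u) * (HahnSeries.C (aA i) - v)) ^
          (2 * 1 - 2))) *
        (∏ i, ((0 : L) - aA i)) ^ (2 * ((2 : ℤ) + 1 - 2 * 1)) =
      -4 * φ (Bq.eval 0) * φ (Aq.eval 0) ^ 3 := by
  have hcoef : ∀ j ≤ N, Phi φ (PowerSeries.mk fun i => (p i).coeff j) =
      c * ((X - C u) * (X - C v) * ∏ i, (X - C (r i))).coeff j := by
    intro j hj
    rw [← coeff_fam N p j hj, ← coeff_map, hsplit, coeff_C_mul]
  set P : Polynomial (HahnSeries ℚ L) := ∏ i, (X - C (r i)) with hP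
  -- the leading coefficient
  have hc : HasLC c 0 1 := by
    have hPm : P.Monic := monic_prod_of_monic _ _ fun i _ => monic_X_sub_C _
    have hPd : P.natDegree = N - 2 := by
      rw [hP, natDegree_prod_of_monic _ _ fun i _ => monic_X_sub_C _]
      simp
    have hQm : ((X - C u) * (X - C v)).Monic := (monic_X_sub_C u).mul (monic_X_sub_C v)
    have hQd : ((X - C u) * (X - C v)).natDegree = 2 := by
      rw [(monic_X_sub_C u).natDegree_mul (monic_X_sub_C v)]; simp
    have hd : ((X - C u) * (X - C v) * P).natDegree = N := by
      rw [hQm.natDegree_mul hPm, hPd, hQd]; omega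
    have h1 : ((X - C u) * (X - C v) * P).coeff N = 1 := by
      have := (hQm.mul hPm).coeff_natDegree
      rwa [hd] at this
    have h2 := hcoef N le_rfl
    rw [h1, mul_one] at h2
    have h3 := hasLC_Phi0 φ (fun i => (p i).coeff N)
    rw [h2] at h3
    have h4 : (p 0).coeff N = 1 := by
      rw [hp0]
      obtain ⟨M, rfl⟩ : ∃ M, N = M + 2 := ⟨N - 2, by omega⟩
      rw [coeff_X_pow_mul]
      have := hAmonic.coeff_natDegree
      rw [hAdeg] at this
      simpa using this
    simpa [h4] using h3
  set R : HahnSeries ℚ L := ∏ i, (HahnSeries.C (0 : L) - r i) with hR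
  set α : L := ∏ i, ((0 : L) - aA i) with hα
  have hRlc : HasLC R 0 α :=
    HasLC.prod _ _ _ fun i => (hasLC_C 0).sub (show HasLC (r i) 0 (aA i) from hr i)
  have hα0 : α ≠ 0 := by
    rw [hα, Finset.prod_ne_zero_iff]
    intro i _
    simpa using haNe i
  have hαA : φ (Aq.eval 0) = α := by
    have := congrArg (eval 0) hAfac
    rw [eval_prod, ← map_zero φ, eval_map_apply] at this
    rw [this]
    simp [hα]
  have hP0 : P.coeff 0 = R := by
    rw [hP, coeff_zero_eq_eval_zero, eval_prod]
    simp [hR]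
  have hB : φ (Bq.eval 0) ≠ 0 := by
    intro h
    apply hAB
    rw [hφ (h.trans (map_zero φ).symm), mul_zero]
  obtain ⟨b, hb⟩ := coeff_prod_hasLC Finset.univ r aA (fun i => hr i) 1
  rw [← hP] at hb
  have hE : HasLC (c * (u * v * R)) 1 (φ (Bq.eval 0)) := by
    have h1 := hcoef 0 (by omega)
    have h2 := hasLC_Phi1 φ (fun i => (p i).coeff 0) (by simp [hp0])
    rw [h1] at h2
    simpa [hp1, mul_coeff_zero, hP0, coeff_zero_eq_eval_zero Bq] using h2
  obtain ⟨g, hG⟩ : ∃ g, HasLC (c * (u * v * P.coeff 1 - (u + v) * R)) 1 g := by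
    have h1 := hcoef 1 (by omega)
    have h2 := hasLC_Phi1 φ (fun i => (p i).coeff 1) (by
      simp only [hp0]
      rw [coeff_X_pow_mul']; simp)
    rw [h1] at h2
    refine ⟨φ ((p 1).coeff 1), ?_⟩
    · convert h2 using 2
      have : (X - C u) * (X - C v) * P = X * (X * P) - C (u + v) * (X * P) + C (u * v) * P := by
        rw [C_add, C_mul]; ring
      rw [this, coeff_add, coeff_sub, coeff_C_mul, coeff_C_mul,
        show (1 : ℕ) = 0 + 1 from rfl, coeff_X_mul, coeff_X_mul, hP0]
      simp
      ring
  -- the symmetric function `u + v` has order at least one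
  have hS : HasLC (R * (c * R * (u + v))) 1 (b * φ (Bq.eval 0) - α * g) := by
    have h1 := hb.mul hE
    have h2 := hRlc.mul hG
    rw [zero_add] at h1 h2
    have h3 := h1.sub h2
    convert h3 using 1
    ring
  have hS2 := (hS.mul hS).lower (show (1 : ℚ) < 1 + 1 by norm_num)
  have hRR := hRlc.mul hRlc
  have hcR := hc.mul hRlc
  have hM := (hRR.mul hcR).mul hE
  have h4 := (hasLC_C (4 : L)).mul hM
  have hcR2 := (hRlc.mul hc).mul (hRlc.mul hc)
  simp only [zero_add, add_zero, one_mul, mul_one] at hM h4 hcR2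
  have hT := hS2.sub h4
  have hT' : (R * c * (R * c)) * (R ^ (2 * 2 - 2) * (u - v) ^ 2) =
      R * (c * R * (u + v)) * (R * (c * R * (u + v))) -
        HahnSeries.C 4 * (R * R * (c * R) * (c * (u * v * R))) := by
    have : (HahnSeries.C (4 : L) : HahnSeries ℚ L) = 4 := map_ofNat _ 4
    rw [this]
    norm_num
    ring
  rw [← hT'] at hT
  have hl := hT.lim0 (by
    rw [zero_sub, neg_ne_zero]
    simp [hα0, hB])
  rw [lim0_mul', hcR2.lim0 (by simp [hα0])] at hl
  have hone : (∏ i, lim0 (((HahnSeries.C (aA i) - u) * (HahnSeries.C (aA i) - v)) ^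
          (2 * 1 - 2))) = 1 := by
    apply Finset.prod_eq_one
    intro i _
    have : (((HahnSeries.C (aA i) - u) * (HahnSeries.C (aA i) - v)) ^ (2 * 1 - 2)) =
      HahnSeries.C (1 : L) := by simp
    rw [this]
    exact (hasLC_C (1 : L)).lim0 one_ne_zero
  rw [hone, hαA]
  have hz : α ^ (2 * ((2 : ℤ) + 1 - 2 * 1)) = α * α := by
    norm_num
    rw [← pow_two]
  rw [hz]
  linear_combination hl
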